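/- Let ζ be the Weierstrass zeta function and ℘ = -ζ' the Weierstrass ℘-function associated to a lattice Λ ⊂ ℂ. For x, y ∈ ℂ with x, y, x+y ∉ Λ, one has the addition formula (ζ(x) + ζ(y) + ζ(-x-y))² = ℘(x) + ℘(y) + ℘(-x-y). -/

import Mathlib

open Complex

/-- The Weierstrass zeta function of the lattice `Λ_τ = ℤ ⊕ ℤτ`:
`ζ(z) = 1/z + ∑_{λ∈Λ∖{0}} (1/(z+λ) - 1/λ + z/λ²)`. -/
noncomputable def wzeta (τ : ℂ) (z : ℂ) : ℂ :=
  1 / z + ∑' p : ℤ × ℤ,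
    if p = 0 then 0
    else 1 / (z + ((p.1 : ℂ) + (p.2 : ℂ) * τ)) - 1 / ((p.1 : ℂ) + (p.2 : ℂ) * τ)
      + z / ((p.1 : ℂ) + (p.2 : ℂ) * τ) ^ 2

/-- The Weierstrass `℘`-function, `℘ = -ζ'`. -/
noncomputable def wp (τ : ℂ) (z : ℂ) : ℂ := -deriv (wzeta τ) z

open Filter Topology

namespace WZ

open PeriodPair

lemma zeta_bound (r : ℝ) (hr : 0 < r) (s : ℂ) (hs : ‖s‖ < r) (l : ℂ) (h : 2 * r ≤ ‖l‖) :
    ‖1 / (s - l) + 1 / l + s / l ^ 2‖ ≤ 2 * r ^ 2 * ‖l‖ ^ (-3 : ℝ) := by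
  have h1 : s - l ≠ 0 := by
    intro e
    rw [sub_eq_zero.mp e] at hs
    linarith
  have hl : 0 < ‖l‖ := by linarith
  have hl0 : l ≠ 0 := norm_pos_iff.mp hl
  have e : 1 / (s - l) + 1 / l + s / l ^ 2 = s ^ 2 / (l ^ 2 * (s - l)) := by
    field_simp
    ring
  have h2 : ‖l‖ / 2 ≤ ‖s - l‖ := by
    rw [norm_sub_rev]
    exact .trans (by linarith) (norm_sub_norm_le l s)
  rw [e]
  calc _ = ‖s‖ ^ 2 / (‖l‖ ^ 2 * ‖s - l‖) := by simp
    _ ≤ r ^ 2 / (‖l‖ ^ 2 * (‖l‖ / 2)) := by gcongr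
    _ = 2 * r ^ 2 / ‖l‖ ^ 3 := by field
    _ = _ := by norm_cast

/-- zeta with the term at 0 missing -/
noncomputable def zE (L : PeriodPair) (z : ℂ) : ℂ :=
  ∑' l : L.lattice, if l.1 = 0 then 0 else (1 / (z - l) + 1 / l + z / l ^ 2)

lemma dac {f : ℂ → ℂ} (x a : ℂ) (h : DifferentiableAt ℂ f (x + a)) :
    DifferentiableAt ℂ (fun w ↦ f (w + a)) x :=
  (h.hasDerivAt.comp_add_const x a).differentiableAt

variable (L : PeriodPair)

lemma zE_hslu : HasSumLocallyUniformly
      (fun (l : L.lattice) (z : ℂ) ↦ if l.1 = 0 then 0 else (1 / (z - l) + 1 / l + z / l ^ 2))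
      (zE L) := by
  refine L.hasSumLocallyUniformly_aux (u := fun r l ↦ 2 * r ^ 2 * ‖l‖ ^ (-3 : ℝ)) _
    (fun _ _ ↦ (ZLattice.summable_norm_rpow _ _ (by simp; norm_num)).mul_left _) fun r hr ↦
    Filter.eventually_atTop.mpr ⟨2 * r, ?_⟩
  rintro _ h s hs l rfl
  split_ifs
  · simp only [norm_zero]; positivity
  · exact zeta_bound r hr s hs l h

lemma term_hasDerivAt (l : L.lattice) (z : ℂ) (hz : z ∈ ((L.lattice : Set ℂ) \ {0})ᶜ) :
    HasDerivAt (fun z : ℂ ↦ if l.1 = 0 then 0 else (1 / (z - l) + 1 / l + z / l ^ 2))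
      (-(if l.1 = 0 then 0 else (1 / (z - l) ^ 2 - 1 / l ^ 2))) z := by
  split_ifs with h
  · simpa using hasDerivAt_const z (0 : ℂ)
  have h1 : z - l ≠ 0 := by
    intro e
    obtain rfl := sub_eq_zero.mp e
    simp_all
  have := ((((hasDerivAt_id z).sub_const l.1).inv h1).add_const (1 / l.1)).add
    ((hasDerivAt_id z).div_const (l.1 ^ 2))
  refine (this.congr_deriv ?_).congr_of_eventuallyEq ?_
  · simp; ring
  · filter_upwards with w
    simp

lemma zE_diff : DifferentiableOn ℂ (zE L) ((L.lattice : Set ℂ) \ {0})ᶜ :=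
  (zE_hslu L).hasSumLocallyUniformlyOn.differentiableOn
    (.of_forall fun s ↦ .fun_sum fun i _ ↦ fun z hz ↦
      (term_hasDerivAt L i z hz).differentiableAt.differentiableWithinAt)
    L.isOpen_compl_lattice_sdiff

lemma zE_deriv : Set.EqOn (deriv (zE L)) (fun z ↦ - L.weierstrassPExcept 0 z)
    ((L.lattice : Set ℂ) \ {0})ᶜ := by
  intro z hz
  have h1 := ((zE_hslu L).tendstoLocallyUniformlyOn.deriv
    (.of_forall fun s ↦ .fun_sum fun i _ ↦ fun z hz ↦
      (term_hasDerivAt L i z hz).differentiableAt.differentiableWithinAt)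
      L.isOpen_compl_lattice_sdiff).tendsto_at hz
  have h2 := (L.hasSum_weierstrassPExcept 0 z).neg
  refine tendsto_nhds_unique h1 (h2.congr fun s ↦ ?_)
  simp only [Function.comp_apply]
  exact (HasDerivAt.fun_sum fun i _ ↦ term_hasDerivAt L i z hz).deriv.symm

lemma zE_hasDerivAt {z : ℂ} (hz : z ∈ ((L.lattice : Set ℂ) \ {0})ᶜ) :
    HasDerivAt (zE L) (- L.weierstrassPExcept 0 z) z := by
  have e : deriv (zE L) z = - L.weierstrassPExcept 0 z := zE_deriv L hz
  rw [← e]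
  exact ((zE_diff L).differentiableAt (L.isOpen_compl_lattice_sdiff.mem_nhds hz)).hasDerivAt

lemma zE_neg (z : ℂ) : zE L (-z) = - zE L z := by
  simp only [zE]
  rw [← (Equiv.neg L.lattice).tsum_eq, ← tsum_neg]
  congr with l
  by_cases h : l.1 = 0
  · simp [h]
  · simp only [Equiv.neg_apply, NegMemClass.coe_neg, neg_eq_zero, h, if_false]
    rw [show -z - -l.1 = -(z - l.1) by ring, div_neg, div_neg]
    ring

lemma zE_zero : zE L 0 = 0 := by
  have := zE_neg L 0
  rw [neg_zero] at this
  exact CharZero.eq_neg_self_iff.mp this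

/-- zeta -/
noncomputable def Z (z : ℂ) : ℂ := 1 / z + zE L z

lemma Z_neg (z : ℂ) : Z L (-z) = - Z L z := by
  simp only [Z, zE_neg, div_neg]
  ring

lemma P_eq (z : ℂ) : L.weierstrassP z = 1 / z ^ 2 + L.weierstrassPExcept 0 z := by
  have := L.weierstrassPExcept_add 0 z
  simp at this
  simp [← this, add_comm]

lemma Z_hasDerivAt {z : ℂ} (hz : z ∉ L.lattice) : HasDerivAt (Z L) (- L.weierstrassP z) z := by
  have h0 : z ≠ 0 := by rintro rfl; simp at hz
  have := (hasDerivAt_inv h0).add (zE_hasDerivAt L (z := z) (by simp [hz]))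
  refine (this.congr_deriv ?_).congr_of_eventuallyEq ?_
  · rw [P_eq]; simp; ring
  · filter_upwards with w
    simp [Z]

lemma Z_add (l : L.lattice) : ∃ c, ∀ z ∉ L.lattice, Z L (z + l) = Z L z + c := by
  have hm : ∀ z : ℂ, z + l ∈ L.lattice ↔ z ∈ L.lattice := fun z ↦ by
    exact L.lattice.toAddSubgroup.add_mem_cancel_right (y := z) l.2
  have hc : (L.lattice : Set ℂ).Countable := by
    have : Countable L.lattice := L.latticeEquivProd.toEquiv.countable_iff.mpr inferInstance
    exact Set.countable_coe_iff.mp this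
  have hconn := (hc.isPathConnected_compl_of_one_lt_rank (by simp)).isConnected.isPreconnected
  have hd : ∀ z ∉ L.lattice, HasDerivAt (fun z ↦ Z L (z + l) - Z L z) 0 z := fun z hz ↦ by
    have h1 := (Z_hasDerivAt L (z := z + l) (by rwa [hm])).comp_add_const z l.1
    refine (h1.sub (Z_hasDerivAt L hz)).congr_deriv ?_
    simp
  have ho : IsOpen ((L.lattice : Set ℂ)ᶜ) := L.isClosed_lattice.isOpen_compl
  obtain ⟨c, hc⟩ := ho.exists_is_const_of_deriv_eq_zero hconn
    (f := fun z ↦ Z L (z + l) - Z L z)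
    (fun z hz ↦ (hd z hz).differentiableAt.differentiableWithinAt)
    (fun z hz ↦ (hd z hz).deriv)
  exact ⟨c, fun z hz ↦ by rw [← hc z hz]; ring⟩

open Classical in
/-- difference -/
noncomputable def F (y x : ℂ) : ℂ :=
  if x ∈ L.lattice ∨ x + y ∈ L.lattice then 0 else
    (Z L x + Z L y - Z L (x + y)) ^ 2 - L.weierstrassP x - L.weierstrassP y - L.weierstrassP (x + y)

lemma F_add (y x : ℂ) (l : L.lattice) : F L y (x + l) = F L y x := by
  have hm : ∀ z : ℂ, z + l ∈ L.lattice ↔ z ∈ L.lattice := fun z ↦ by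
    exact L.lattice.toAddSubgroup.add_mem_cancel_right (y := z) l.2
  have e : x + l + y = (x + y) + l := by ring
  obtain ⟨c, hc⟩ := Z_add L l
  have hiff : (x + l ∈ L.lattice ∨ x + l + y ∈ L.lattice) ↔
      (x ∈ L.lattice ∨ x + y ∈ L.lattice) := by
    rw [e, hm, hm]
  unfold F
  by_cases h : x ∈ L.lattice ∨ x + y ∈ L.lattice
  · rw [if_pos h, if_pos (hiff.mpr h)]
  · rw [if_neg h, if_neg (fun h' ↦ h (hiff.mp h')), e, hc _ (fun h' ↦ h (Or.inl h')),
      hc _ (fun h' ↦ h (Or.inr h')), L.weierstrassP_add_coe, L.weierstrassP_add_coe]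
    ring

lemma F_symm (y x : ℂ) : F L y (-x - y) = F L y x := by
  have hm : ∀ z, -z ∈ L.lattice ↔ z ∈ L.lattice := fun z ↦ neg_mem_iff
  have e : -x - y = -(x + y) := by ring
  have e' : -(x + y) + y = -x := by ring
  have hiff : (-x - y ∈ L.lattice ∨ -x - y + y ∈ L.lattice) ↔
      (x ∈ L.lattice ∨ x + y ∈ L.lattice) := by
    rw [e, e', hm, hm, or_comm]
  unfold F
  by_cases h : x ∈ L.lattice ∨ x + y ∈ L.lattice
  · rw [if_pos h, if_pos (hiff.mpr h)]
  · rw [if_neg h, if_neg (fun h' ↦ h (hiff.mp h')), e, e', Z_neg, Z_neg, L.weierstrassP_neg,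
      L.weierstrassP_neg]
    ring

lemma F_diff_zero (y : ℂ) (hy : y ∉ L.lattice) : DifferentiableAt ℂ (F L y) 0 := by
  set g : ℂ → ℂ := fun x ↦ zE L x + Z L y - Z L (x + y) with hg
  set U : Set ℂ := {x | x ∈ ((L.lattice : Set ℂ) \ {0})ᶜ ∧ x + y ∈ (L.lattice : Set ℂ)ᶜ} with hU
  have hUo : IsOpen U := L.isOpen_compl_lattice_sdiff.inter
    (L.isClosed_lattice.isOpen_compl.preimage (by fun_prop : Continuous fun x : ℂ ↦ x + y))
  have h0U : (0 : ℂ) ∈ U := by simp [hU, hy]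
  have hgd : ∀ x ∈ U, HasDerivAt g (- L.weierstrassPExcept 0 x + L.weierstrassP (x + y)) x := by
    intro x hx
    have := ((zE_hasDerivAt L hx.1).add_const (Z L y)).sub
      ((Z_hasDerivAt L hx.2).comp_add_const x y)
    exact this.congr_deriv (by ring)
  have hgU : DifferentiableOn ℂ g U := fun x hx ↦ (hgd x hx).differentiableAt.differentiableWithinAt
  have hds : DifferentiableAt ℂ (dslope g 0) 0 :=
    ((differentiableOn_dslope (hUo.mem_nhds h0U)).mpr hgU).differentiableAt (hUo.mem_nhds h0U)
  have hg0 : g 0 = 0 := by simp [hg, zE_zero]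
  have hP : DifferentiableAt ℂ (fun x ↦ L.weierstrassP (x + y)) 0 := by
    have h1 : DifferentiableAt ℂ L.weierstrassP (0 + y) :=
      L.differentiableOn_weierstrassP.differentiableAt
        (L.isClosed_lattice.isOpen_compl.mem_nhds (by simpa using hy))
    exact dac 0 y h1
  have hPE := ((L.analyticAt_weierstrassPExcept 0).differentiableAt)
  have hgd0 := (hgd 0 h0U).differentiableAt
  have key : F L y =ᶠ[𝓝 0] fun x ↦ 2 * dslope g 0 x + g x ^ 2 - L.weierstrassPExcept 0 x
      - L.weierstrassP y - L.weierstrassP (x + y) := by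
    filter_upwards [hUo.mem_nhds h0U] with x hx
    by_cases hx0 : x = 0
    · subst hx0
      rw [dslope_same, (hgd 0 h0U).deriv, hg0]
      simp [F]
      ring
    · have h1 : x ∉ L.lattice := fun h ↦ hx.1 ⟨h, hx0⟩
      have h2 : x + y ∉ L.lattice := hx.2
      rw [dslope_of_ne _ hx0, slope_def_field, hg0]
      simp only [F, h1, h2, or_self, if_false, P_eq L x]
      have : Z L x + Z L y - Z L (x + y) = 1 / x + g x := by simp only [hg, Z]; ring
      rw [this]
      simp only [sub_zero]
      field_simp
      ring
  refine DifferentiableAt.congr_of_eventuallyEq ?_ key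
  exact ((((hds.const_mul 2).add (hgd0.pow 2)).sub hPE).sub_const _).sub hP

lemma F_diff (y : ℂ) (hy : y ∉ L.lattice) : Differentiable ℂ (F L y) := by
  have hA : ∀ x ∈ L.lattice, DifferentiableAt ℂ (F L y) x := fun x hx ↦ by
    have e : F L y = fun w ↦ F L y (w + -x) := by
      ext w
      exact (F_add L y w ⟨-x, neg_mem hx⟩).symm
    rw [e]
    refine dac x (-x) ?_
    simpa using F_diff_zero L y hy
  intro x
  by_cases hx : x ∈ L.lattice
  · exact hA x hx
  by_cases hxy : x + y ∈ L.lattice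
  · have e : F L y = F L y ∘ fun w ↦ -w - y := by
      ext w
      exact (F_symm L y w).symm
    rw [e]
    refine DifferentiableAt.comp x (hA _ ?_) (by fun_prop)
    rw [show -x - y = -(x + y) by ring]
    exact neg_mem hxy
  have hPx : ∀ x ∉ L.lattice, DifferentiableAt ℂ L.weierstrassP x := fun x hx ↦
    L.differentiableOn_weierstrassP.differentiableAt (L.isClosed_lattice.isOpen_compl.mem_nhds hx)
  have ho : IsOpen ((L.lattice : Set ℂ)ᶜ) := L.isClosed_lattice.isOpen_compl
  have key : F L y =ᶠ[𝓝 x] fun x ↦ (Z L x + Z L y - Z L (x + y)) ^ 2 - L.weierstrassP x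
      - L.weierstrassP y - L.weierstrassP (x + y) := by
    filter_upwards [ho.mem_nhds hx, (ho.preimage
      (by fun_prop : Continuous fun x : ℂ ↦ x + y)).mem_nhds hxy] with w h1 h2
    have h1' : w ∉ L.lattice := h1
    have h2' : w + y ∉ L.lattice := h2
    simp [F, h1', h2']
  refine DifferentiableAt.congr_of_eventuallyEq ?_ key
  exact ((((((Z_hasDerivAt L hx).differentiableAt.add_const _).sub
    (dac x y (Z_hasDerivAt L hxy).differentiableAt)).pow 2).sub (hPx x hx)).sub_const
    _).sub (dac x y (hPx _ hxy))

lemma F_zero (y : ℂ) (hy : y ∉ L.lattice) (x : ℂ) : F L y x = 0 := by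
  have hd := F_diff L y hy
  have h := hd.apply_eq_apply_of_bounded (IsZLattice.isCompact_range_of_periodic L.lattice _
    hd.continuous fun z w hw ↦ F_add L y z ⟨w, hw⟩).isBounded x 0
  rw [h]
  simp [F]

/-- The period pair `(1, τ)`. -/
noncomputable def pp (τ : ℂ) (hτ : 0 < τ.im) : PeriodPair where
  ω₁ := 1
  ω₂ := τ
  indep := by
    rw [LinearIndependent.pair_iff]
    intro s t h
    have him := congrArg Complex.im h
    have hre := congrArg Complex.re h
    simp at him hre
    have ht : t = 0 := by
      rcases him with h | h
      · exact h
      · exact absurd h hτ.ne'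
    simp [ht] at hre
    exact ⟨hre, ht⟩

lemma wzeta_eq (τ : ℂ) (hτ : 0 < τ.im) : wzeta τ = Z (pp τ hτ) := by
  ext z
  simp only [wzeta, Z, zE]
  congr 1
  rw [← ((pp τ hτ).latticeEquivProd.symm.toEquiv).tsum_eq, ← (Equiv.neg (ℤ × ℤ)).tsum_eq]
  congr with p
  have hv : (((pp τ hτ).latticeEquivProd.symm p).1 : ℂ) = p.1 + p.2 * τ := by
    rw [latticeEquiv_symm_apply]
    simp [pp]
  have h0 : (((pp τ hτ).latticeEquivProd.symm p).1 : ℂ) = 0 ↔ p = 0 := by simp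
  simp only [LinearEquiv.coe_toEquiv, h0, Equiv.neg_apply, neg_eq_zero]
  rw [hv]
  split_ifs
  · rfl
  · simp only [Prod.fst_neg, Prod.snd_neg, Int.cast_neg]
    rw [show -(p.1 : ℂ) + -(p.2 : ℂ) * τ = -(p.1 + p.2 * τ) by ring, div_neg, neg_sq]
    ring

end WZ

/-- Addition formula: for `x, y, x+y ∉ Λ_τ`,
`(ζ(x) + ζ(y) + ζ(-x-y))² = ℘(x) + ℘(y) + ℘(-x-y)`. -/
theorem wzeta_addition_formula (τ : ℂ) (hτ : 0 < τ.im) (x y : ℂ)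
    (hx : ¬∃ m n : ℤ, x = (m : ℂ) + (n : ℂ) * τ)
    (hy : ¬∃ m n : ℤ, y = (m : ℂ) + (n : ℂ) * τ)
    (hxy : ¬∃ m n : ℤ, x + y = (m : ℂ) + (n : ℂ) * τ) :
    (wzeta τ x + wzeta τ y + wzeta τ (-x - y)) ^ 2
      = wp τ x + wp τ y + wp τ (-x - y) := by
  have hmem : ∀ z, (¬∃ m n : ℤ, z = (m : ℂ) + (n : ℂ) * τ) → z ∉ (WZ.pp τ hτ).lattice := by
    intro z hz h
    obtain ⟨m, n, e⟩ := PeriodPair.mem_lattice.mp h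
    exact hz ⟨m, n, by simpa [WZ.pp] using e.symm⟩
  have hx' := hmem x hx
  have hy' := hmem y hy
  have hxy' := hmem _ hxy
  have e : -x - y = -(x + y) := by ring
  have hn : -(x + y) ∉ (WZ.pp τ hτ).lattice := by rwa [neg_mem_iff]
  have hF := WZ.F_zero (WZ.pp τ hτ) y hy' x
  simp only [WZ.F, hx', hxy', or_self, if_false] at hF
  simp only [wp, WZ.wzeta_eq τ hτ, e, (WZ.Z_hasDerivAt _ hx').deriv,
    (WZ.Z_hasDerivAt _ hy').deriv, (WZ.Z_hasDerivAt _ hn).deriv, WZ.Z_neg,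
    PeriodPair.weierstrassP_neg]
  linear_combination hF
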